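/- Let N ≥ 2 be an integer, let g ∈ ℂ[[t]] be the unique power series with constant coefficient 1 satisfying g(t·(1+N·t)⁻¹) = g(t)·(1−t²), and let σ : ℂ[[h,t]] → ℂ[[h,t]] be the continuous ℂ-algebra endomorphism fixing h with σ(t) = t·(1+h·N·t)⁻¹ (corresponding to the shift u ↦ u + hN under t = u⁻¹). Set R̄ = g(h·t)·(1 − h·t·P), an invertible element of (End ℂ^N ⊗ End ℂ^N)[[h,t]]. Then the crossing symmetry properties hold: (R̄⁻¹)^{t₁} · (σR̄)^{t₁} = 1 and (R̄⁻¹)^{t₂} · (σR̄)^{t₂} = 1, where t₁ (respectively t₂) denotes the partial transpose in the first (respectively second) tensor factor applied coefficientwise, and σR̄ is obtained by applying σ to each matrix entry of R̄ (it equals the normalized R-matrix R̄(u+hN)). -/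

import Mathlib

/-- Composition `f ↦ f(a)` of a one-variable formal power series with a power series `a`
(intended for `a` with zero constant coefficient), defined coefficientwise. -/
noncomputable def PowerSeries.substC (a f : PowerSeries ℂ) : PowerSeries ℂ :=
  PowerSeries.mk fun m =>
    ∑ n ∈ Finset.range (m + 1), PowerSeries.coeff n f * PowerSeries.coeff m (a ^ n)

/-- Substitution of a two-variable power series `a ∈ ℂ[[h,t]]` (intended with zero
constant coefficient) into a one-variable power series `f`, giving `f(a)`,
defined coefficientwise. -/
noncomputable def substM (a : MvPowerSeries (Fin 2) ℂ) (f : PowerSeries ℂ) :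
    MvPowerSeries (Fin 2) ℂ :=
  fun d => ∑ n ∈ Finset.range (d.sum (fun _ k => k) + 1),
    PowerSeries.coeff n f * MvPowerSeries.coeff d (a ^ n)

/-- The continuous `ℂ`-algebra endomorphism of `ℂ[[h,t]]` fixing `h = X 0` and sending
`t = X 1` to `a` (intended with zero constant coefficient):
`f(h,t) ↦ f(h,a) = ∑_{m,n} f_{m,n} hᵐ aⁿ`, defined coefficientwise (the coefficient of a
monomial `e` receives contributions only from `(m,n)` with `m + n ≤ deg e`). -/
noncomputable def subst2 (a f : MvPowerSeries (Fin 2) ℂ) : MvPowerSeries (Fin 2) ℂ :=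
  fun e => ∑ p ∈ Finset.range (e.sum (fun _ k => k) + 1) ×ˢ
      Finset.range (e.sum (fun _ k => k) + 1),
    MvPowerSeries.coeff (Finsupp.single 0 p.1 + Finsupp.single 1 p.2) f *
      MvPowerSeries.coeff e (MvPowerSeries.X 0 ^ p.1 * a ^ p.2)

/-- The permutation operator `P : x ⊗ y ↦ y ⊗ x` on `ℂ^N ⊗ ℂ^N`, as a matrix with
entries in `ℂ[[h,t]]`. -/
noncomputable def Pmat (N : ℕ) :
    Matrix (Fin N × Fin N) (Fin N × Fin N) (MvPowerSeries (Fin 2) ℂ) :=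
  Matrix.of fun p q => if p.1 = q.2 ∧ p.2 = q.1 then 1 else 0

/-- The normalized Yang R-matrix `R̄ = g(h·t)·(1 − h·t·P)` as an element of
`(End ℂ^N ⊗ End ℂ^N)[[h,t]]` (variables `h = X 0`, `t = X 1`). -/
noncomputable def Rbar (N : ℕ) (g : PowerSeries ℂ) :
    Matrix (Fin N × Fin N) (Fin N × Fin N) (MvPowerSeries (Fin 2) ℂ) :=
  substM (MvPowerSeries.X 0 * MvPowerSeries.X 1) g •
    ((1 : Matrix (Fin N × Fin N) (Fin N × Fin N) (MvPowerSeries (Fin 2) ℂ))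
      - (MvPowerSeries.X 0 * MvPowerSeries.X 1 : MvPowerSeries (Fin 2) ℂ) • Pmat N)

/-- Partial transpose in the first tensor factor: for `A = Σ aᵢ ⊗ bᵢ`,
`A^{t₁} = Σ aᵢᵀ ⊗ bᵢ`, i.e. `(A^{t₁})_{(i,j),(k,l)} = A_{(k,j),(i,l)}`. -/
def pt1 {N : ℕ} {R : Type*}
    (A : Matrix (Fin N × Fin N) (Fin N × Fin N) R) :
    Matrix (Fin N × Fin N) (Fin N × Fin N) R :=
  Matrix.of fun p q => A (q.1, p.2) (p.1, q.2)

/-- Partial transpose in the second tensor factor: for `A = Σ aᵢ ⊗ bᵢ`,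
`A^{t₂} = Σ aᵢ ⊗ bᵢᵀ`, i.e. `(A^{t₂})_{(i,j),(k,l)} = A_{(i,l),(k,j)}`. -/
def pt2 {N : ℕ} {R : Type*}
    (A : Matrix (Fin N × Fin N) (Fin N × Fin N) R) :
    Matrix (Fin N × Fin N) (Fin N × Fin N) R :=
  Matrix.of fun p q => A (p.1, q.2) (q.1, p.2)

open MvPowerSeries in
theorem aux_coeff_pow {τ : Type*} (a : MvPowerSeries τ ℂ) (ha : constantCoeff a = 0)
    (n : ℕ) (e : τ →₀ ℕ) (h : e.degree < n) : coeff e (a ^ n) = 0 := by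
  apply coeff_of_lt_order
  exact lt_of_lt_of_le (by exact_mod_cast h) (le_order_pow_of_constantCoeff_eq_zero n ha)

theorem aux_deg {τ : Type*} (e : τ →₀ ℕ) : e.sum (fun _ k => k) = e.degree := rfl

theorem substC_eq (a f : PowerSeries ℂ) (ha : PowerSeries.constantCoeff a = 0) :
    PowerSeries.substC a f = PowerSeries.subst a f := by
  have hs : PowerSeries.HasSubst a := PowerSeries.HasSubst.of_constantCoeff_zero' ha
  ext m
  rw [PowerSeries.coeff_subst' hs, PowerSeries.substC, PowerSeries.coeff_mk]
  symm
  apply finsum_eq_sum_of_support_subset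
  intro n hn
  by_contra hcon
  apply hn
  have : m < n := by simpa using hcon
  have h0 : PowerSeries.coeff m (a ^ n) = 0 := aux_coeff_pow a ha n _ (by simpa using this)
  simp [h0]

theorem substM_eq (a : MvPowerSeries (Fin 2) ℂ) (f : PowerSeries ℂ)
    (ha : MvPowerSeries.constantCoeff a = 0) :
    substM a f = PowerSeries.subst a f := by
  have hs : PowerSeries.HasSubst a := PowerSeries.HasSubst.of_constantCoeff_zero ha
  ext m
  rw [PowerSeries.coeff_subst hs]
  symm
  change _ = ∑ n ∈ Finset.range (m.sum (fun _ k => k) + 1),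
    PowerSeries.coeff n f * MvPowerSeries.coeff m (a ^ n)
  apply finsum_eq_sum_of_support_subset
  intro n hn
  by_contra hcon
  apply hn
  have : m.degree < n := by simpa [aux_deg] using hcon
  have h0 := aux_coeff_pow a ha n _ this
  simp [h0]

theorem subst2_eq (a f : MvPowerSeries (Fin 2) ℂ)
    (ha : MvPowerSeries.constantCoeff a = 0) :
    subst2 a f = MvPowerSeries.subst ![MvPowerSeries.X 0, a] f := by
  have hs : MvPowerSeries.HasSubst ![MvPowerSeries.X 0, a] :=
    MvPowerSeries.hasSubst_of_constantCoeff_zero (fun s => by fin_cases s <;> simp [ha])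
  ext e
  rw [MvPowerSeries.coeff_subst hs, ← finsum_comp_equiv (finTwoArrowEquiv' ℕ).symm]
  symm
  have key : ∀ p : ℕ × ℕ, (finTwoArrowEquiv' ℕ).symm p
      = Finsupp.single 0 p.1 + Finsupp.single 1 p.2 := by
    intro p
    ext i
    fin_cases i <;> simp [finTwoArrowEquiv']
  have key2 : ∀ p : ℕ × ℕ, ((finTwoArrowEquiv' ℕ).symm p).prod
      (fun s e => (![MvPowerSeries.X 0, a] s : MvPowerSeries (Fin 2) ℂ) ^ e)
      = MvPowerSeries.X 0 ^ p.1 * a ^ p.2 := by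
    intro p
    rw [Finsupp.prod_fintype _ _ (by simp), key]
    simp
  simp only [key2]
  simp only [key]
  apply finsum_eq_sum_of_support_subset
  intro p hn
  by_contra hcon
  apply hn
  have h1 : e.degree < p.1 ∨ e.degree < p.2 := by
    rw [aux_deg] at hcon
    simp at hcon
    omega
  have h0 : MvPowerSeries.coeff e (MvPowerSeries.X 0 ^ p.1 * a ^ p.2) = 0 := by
    apply MvPowerSeries.coeff_of_lt_order
    have hX := MvPowerSeries.le_order_pow_of_constantCoeff_eq_zero p.1
      (f := (MvPowerSeries.X 0 : MvPowerSeries (Fin 2) ℂ)) (by simp)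
    have hA := MvPowerSeries.le_order_pow_of_constantCoeff_eq_zero p.2 ha
    refine lt_of_lt_of_le ?_ ((add_le_add hX hA).trans MvPowerSeries.le_order_mul)
    have : e.degree < p.1 + p.2 := by omega
    exact_mod_cast this
  simp [h0]

theorem Pmat_sq (N : ℕ) : Pmat N * Pmat N = 1 := by
  ext ⟨i, j⟩ ⟨k, l⟩ : 1
  rw [Matrix.mul_apply, Finset.sum_eq_single (j, i)]
  · simp [Pmat, Matrix.one_apply, and_comm]
  · rintro ⟨b, c⟩ - h
    have : ¬ (i = c ∧ j = b) := by
      rintro ⟨rfl, rfl⟩; exact h rfl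
    simp [Pmat, this]
  · simp

theorem Qmat_sq (N : ℕ) : pt1 (Pmat N) * pt1 (Pmat N)
    = (N : MvPowerSeries (Fin 2) ℂ) • pt1 (Pmat N) := by
  ext ⟨i, j⟩ ⟨k, l⟩ : 1
  simp only [Matrix.mul_apply, Fintype.sum_prod_type, pt1, Pmat, Matrix.of_apply,
    Matrix.smul_apply]
  by_cases h1 : j = i <;> by_cases h2 : k = l <;> simp [h1, h2]

theorem pt2_Pmat (N : ℕ) : pt2 (Pmat N) = pt1 (Pmat N) := by
  ext ⟨i, j⟩ ⟨k, l⟩ : 1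
  simp only [pt1, pt2, Pmat, Matrix.of_apply]
  congr 1
  ext; constructor <;> (rintro ⟨rfl, rfl⟩; simp)

theorem pt1_lin (N : ℕ) (c y : MvPowerSeries (Fin 2) ℂ) :
    pt1 (c • (1 + y • Pmat N)) = c • (1 + y • pt1 (Pmat N)) := by
  ext ⟨i, j⟩ ⟨k, l⟩ : 1
  simp [pt1, Matrix.one_apply, eq_comm]

theorem pt2_lin (N : ℕ) (c y : MvPowerSeries (Fin 2) ℂ) :
    pt2 (c • (1 + y • Pmat N)) = c • (1 + y • pt1 (Pmat N)) := by
  rw [← pt2_Pmat]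
  ext ⟨i, j⟩ ⟨k, l⟩ : 1
  simp [pt2, Matrix.one_apply, eq_comm]

theorem mul_lin {n : Type*} [Fintype n] [DecidableEq n] {R : Type*} [CommRing R]
    (Q : Matrix n n R) (m c d y z : R) (hQ : Q * Q = m • Q)
    (hcd : c * d = 1) (hyz : y + z + m * (y * z) = 0) :
    (c • (1 + y • Q)) * (d • (1 + z • Q)) = 1 := by
  have : (c • (1 + y • Q)) * (d • (1 + z • Q))
      = (c * d) • (1 + (y + z + m * (y * z)) • Q) := by
    simp only [Matrix.smul_mul, Matrix.mul_smul, mul_add, add_mul, one_mul, mul_one, hQ]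
    module
  rw [this, hcd, hyz]; simp

theorem mul_lin' {n : Type*} [Fintype n] [DecidableEq n] {R : Type*} [CommRing R]
    (Q : Matrix n n R) (c d y : R) (hQ : Q * Q = 1)
    (hcd : c * d * (1 - y * y) = 1) :
    (c • (1 + y • Q)) * (d • (1 + (-y) • Q)) = 1 := by
  have : (c • (1 + y • Q)) * (d • (1 + (-y) • Q))
      = (c * d * (1 - y * y)) • 1 := by
    simp only [Matrix.smul_mul, Matrix.mul_smul, mul_add, add_mul, one_mul, mul_one, hQ]
    module
  rw [this, hcd]; simp

/-- Crossing symmetry of the normalized Yang R-matrix: with `g` the normalizing series and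
`σ` the endomorphism of `ℂ[[h,t]]` fixing `h` and sending `t` to `t·(1+h·N·t)⁻¹`
(the shift `u ↦ u + hN`), the matrix `R̄ = g(h·t)(1−h·t·P)` is invertible and its
(two-sided) inverse `S` satisfies `S^{t₁}·(σR̄)^{t₁} = 1` and `S^{t₂}·(σR̄)^{t₂} = 1`,
where `σR̄` is obtained by applying `σ` entrywise. -/
theorem statement3 (N : ℕ) (hN : 2 ≤ N) (g : PowerSeries ℂ)
    (hg1 : PowerSeries.constantCoeff g = 1)
    (hg : PowerSeries.substC (PowerSeries.X * (1 + (N : ℂ) • PowerSeries.X)⁻¹) g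
        = g * (1 - PowerSeries.X ^ 2)) :
    ∃ S : Matrix (Fin N × Fin N) (Fin N × Fin N) (MvPowerSeries (Fin 2) ℂ),
      Rbar N g * S = 1 ∧ S * Rbar N g = 1 ∧
      pt1 S * pt1 ((Rbar N g).map (subst2 (MvPowerSeries.X 1 *
        MvPowerSeries.invOfUnit
          (1 + MvPowerSeries.C (N : ℂ) * MvPowerSeries.X 0 * MvPowerSeries.X 1)
          1))) = 1 ∧
      pt2 S * pt2 ((Rbar N g).map (subst2 (MvPowerSeries.X 1 *
        MvPowerSeries.invOfUnit
          (1 + MvPowerSeries.C (N : ℂ) * MvPowerSeries.X 0 * MvPowerSeries.X 1)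
          1))) = 1 := by
  set A : MvPowerSeries (Fin 2) ℂ := MvPowerSeries.X 1 * MvPowerSeries.invOfUnit
          (1 + MvPowerSeries.C (N : ℂ) * MvPowerSeries.X 0 * MvPowerSeries.X 1) 1 with hA
  set x : MvPowerSeries (Fin 2) ℂ := MvPowerSeries.X 0 * MvPowerSeries.X 1 with hx
  have hA0 : MvPowerSeries.constantCoeff A = 0 := by simp [hA]
  have hx0 : MvPowerSeries.constantCoeff x = 0 := by simp [hx]
  have hxs : PowerSeries.HasSubst x := PowerSeries.HasSubst.of_constantCoeff_zero hx0
  have hCN : (MvPowerSeries.C (N : ℂ) : MvPowerSeries (Fin 2) ℂ) = (N : MvPowerSeries (Fin 2) ℂ) :=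
    map_natCast _ N
  -- the shifted variable
  set y : MvPowerSeries (Fin 2) ℂ := MvPowerSeries.X 0 * A with hy
  have hinv := MvPowerSeries.mul_invOfUnit
    (1 + MvPowerSeries.C (N : ℂ) * MvPowerSeries.X 0 * MvPowerSeries.X 1 :
      MvPowerSeries (Fin 2) ℂ) 1 (by simp)
  have hyx : y * (1 + N * x) = x := by
    rw [hCN] at hinv
    rw [hy, hA, hCN, hx]
    linear_combination (MvPowerSeries.X 0 * MvPowerSeries.X 1) * hinv
  -- one-variable
  set b : PowerSeries ℂ := PowerSeries.X * (1 + (N : ℂ) • PowerSeries.X)⁻¹ with hb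
  have hb0 : PowerSeries.constantCoeff b = 0 := by simp [hb]
  have hbX : b * (1 + (N : PowerSeries ℂ) * PowerSeries.X) = PowerSeries.X := by
    have h1 : ((N : ℂ) • PowerSeries.X : PowerSeries ℂ) = (N : PowerSeries ℂ) * PowerSeries.X := by
      rw [PowerSeries.smul_eq_C_mul, map_natCast]
    rw [hb, h1, mul_assoc, PowerSeries.inv_mul_cancel, mul_one]
    simp
  clear_value b
  have hbs : PowerSeries.HasSubst b := PowerSeries.HasSubst.of_constantCoeff_zero' hb0
  have hby : PowerSeries.subst x b = y := by
    have h := congrArg (PowerSeries.substAlgHom (R := ℂ) hxs) hbX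
    rw [map_mul, map_add, map_mul, map_one, map_natCast, PowerSeries.substAlgHom_X,
      PowerSeries.coe_substAlgHom] at h
    have hu : IsUnit (1 + (N : MvPowerSeries (Fin 2) ℂ) * x) := by
      rw [MvPowerSeries.isUnit_iff_constantCoeff]; simp [hx0]
    exact hu.mul_right_cancel (h.trans hyx.symm)
  set G := PowerSeries.subst x g with hG
  have hgy : PowerSeries.subst y g = G * (1 - x * x) := by
    rw [substC_eq _ _ hb0] at hg
    have h := congrArg (PowerSeries.substAlgHom (R := ℂ) hxs) hg
    rw [map_mul, map_sub, map_pow, map_one, PowerSeries.substAlgHom_X,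
      PowerSeries.coe_substAlgHom, PowerSeries.subst_comp_subst_apply hbs hxs, hby] at h
    rw [h, sq]
  have hss : MvPowerSeries.HasSubst ![MvPowerSeries.X 0, A] :=
    MvPowerSeries.hasSubst_of_constantCoeff_zero (fun s => by fin_cases s <;> simp [hA0])
  have hσ : subst2 A = MvPowerSeries.substAlgHom (R := ℂ) hss := by
    funext f
    rw [subst2_eq _ _ hA0, MvPowerSeries.coe_substAlgHom]
  have hσx : MvPowerSeries.substAlgHom (R := ℂ) hss x = y := by
    rw [hx, map_mul, MvPowerSeries.substAlgHom_X, MvPowerSeries.substAlgHom_X]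
    simp [hy]
  have hσG : MvPowerSeries.substAlgHom (R := ℂ) hss G = G * (1 - x * x) := by
    rw [← hgy, hG, MvPowerSeries.coe_substAlgHom, PowerSeries.subst_def, PowerSeries.subst_def,
      MvPowerSeries.subst_comp_subst_apply hxs.const hss, ← MvPowerSeries.coe_substAlgHom hss, hσx]
  have hR : Rbar N g = G • (1 + (-x) • Pmat N) := by
    rw [Rbar, substM_eq _ _ hx0, neg_smul, ← sub_eq_add_neg]
  have hσR : (Rbar N g).map (subst2 A) = (G * (1 - x * x)) • (1 + (-y) • Pmat N) := by
    rw [hσ, hR]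
    ext p q : 1
    simp only [Matrix.map_apply, Matrix.smul_apply, Matrix.add_apply, smul_eq_mul, map_mul,
      map_add, map_neg, hσG, hσx, Matrix.one_apply, Pmat, Matrix.of_apply]
    split_ifs <;> simp only [map_one, map_zero]
  have hGu : IsUnit (G * (1 - x * x)) := by
    rw [MvPowerSeries.isUnit_iff_constantCoeff, map_mul]
    have : MvPowerSeries.constantCoeff G = 1 := by
      have h := PowerSeries.constantCoeff_subst_eq_zero hx0 (g - 1) (by simp [hg1])
      rw [← PowerSeries.coe_substAlgHom hxs, map_sub, map_one, PowerSeries.coe_substAlgHom,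
        map_sub, map_one, sub_eq_zero] at h
      exact h
    rw [this]; simp [hx0]
  obtain ⟨u, hu⟩ := hGu.exists_left_inv
  have hS : (u • (1 + x • Pmat N)) * Rbar N g = 1 := by
    rw [hR]
    exact mul_lin' _ _ _ _ (Pmat_sq N) (by linear_combination hu)
  refine ⟨u • (1 + x • Pmat N), mul_eq_one_comm.mp hS, hS, ?_, ?_⟩
  · rw [hσR, pt1_lin, pt1_lin]
    exact mul_lin _ _ _ _ _ _ (Qmat_sq N) hu (by linear_combination -hyx)
  · rw [hσR, pt2_lin, pt2_lin]
    exact mul_lin _ _ _ _ _ _ (Qmat_sq N) hu (by linear_combination -hyx)
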